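/- Let H be a finite-dimensional complex Hilbert space of the form H_A ⊗ H_B, let S_A be a unitary on H_A and S_B a unitary on H_B, and let |Φ⟩ = (|00⟩ + |11⟩)/√2 be the Bell state of a two-qubit ancilla ℂ² ⊗ ℂ². Let cS_A = |0⟩⟨0| ⊗ I + |1⟩⟨1| ⊗ S_A be controlled by the first ancilla qubit and cS_B = |0⟩⟨0| ⊗ I + |1⟩⟨1| ⊗ S_B controlled by the second ancilla qubit. Then for every matrix ρ on H_A ⊗ H_B, the partial trace over the two ancilla qubits of (|Φ⟩⟨Φ| ⊗ I) · (cS_A ⊗ cS_B) (|Φ⟩⟨Φ| ⊗ ρ) (cS_A ⊗ cS_B)† equals D ρ D†, where D = (I + S_A ⊗ S_B)/2. -/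

import Mathlib

open Matrix Kronecker BigOperators

noncomputable section

/-- The computational basis vector `|0⟩` of a control qubit `ℂ²`. -/
def ket0 : Fin 2 → ℂ := fun i => if i = 0 then 1 else 0

/-- The computational basis vector `|1⟩` of a control qubit `ℂ²`. -/
def ket1 : Fin 2 → ℂ := fun i => if i = 1 then 1 else 0

/-- The controlled-`S` operator `|0⟩⟨0| ⊗ I + |1⟩⟨1| ⊗ S` on `ℂ² ⊗ H`. -/
def ctrl {m : Type*} [Fintype m] [DecidableEq m] (S : Matrix m m ℂ) :
    Matrix (Fin 2 × m) (Fin 2 × m) ℂ :=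
  vecMulVec ket0 (star ket0) ⊗ₖ (1 : Matrix m m ℂ)
    + vecMulVec ket1 (star ket1) ⊗ₖ S

/-- The Bell state `|Φ⟩ = (|00⟩ + |11⟩)/√2` of the two-qubit ancilla `ℂ² ⊗ ℂ²`. -/
def bell : Fin 2 × Fin 2 → ℂ :=
  fun p => if p.1 = p.2 then (((Real.sqrt 2 : ℝ) : ℂ))⁻¹ else 0

/-- `cS_A ⊗ cS_B`, rearranged so that the first ancilla qubit controls `S_A` on `H_A`
and the second ancilla qubit controls `S_B` on `H_B`, as an operator on
`(ℂ² ⊗ ℂ²) ⊗ (H_A ⊗ H_B)`. -/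
def combineCtrl {nA nB : Type*} (CA : Matrix (Fin 2 × nA) (Fin 2 × nA) ℂ)
    (CB : Matrix (Fin 2 × nB) (Fin 2 × nB) ℂ) :
    Matrix ((Fin 2 × Fin 2) × nA × nB) ((Fin 2 × Fin 2) × nA × nB) ℂ :=
  fun p q => CA (p.1.1, p.2.1) (q.1.1, q.2.1) * CB (p.1.2, p.2.2) (q.1.2, q.2.2)

/-- Partial trace over the two ancilla qubits. -/
def ptrAnc2 {nA nB : Type*} [Fintype nA] [Fintype nB]
    (M : Matrix ((Fin 2 × Fin 2) × nA × nB) ((Fin 2 × Fin 2) × nA × nB) ℂ) :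
    Matrix (nA × nB) (nA × nB) ℂ :=
  fun x y => ∑ a : Fin 2 × Fin 2, M (a, x) (a, y)

/-!
The operator `V = |Φ⟩ ⊗ I` satisfies `|Φ⟩⟨Φ| ⊗ ρ = V ρ V†`, and cyclicity of the trace in
the ancilla gives `tr_anc (V X) = X V`. Hence `tr_anc (V V† C V ρ V† C†) = (V† C V) ρ (V† C V)†` for
every operator `C`. For `C = cS_A ⊗ cS_B` only the blocks `|ii⟩⟨ii|` of `C` contribute to
`V† C V = ⟨Φ|C|Φ⟩`; they are `S_A ^ i ⊗ S_B ^ i`, and their average over `i ∈ {0, 1}` is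
`(I + S_A ⊗ S_B)/2`.
-/

section PartialMatrixElement

variable {R a b m n : Type*} [CommSemiring R]

/-- The partial trace over the left tensor factor of a (possibly rectangular) matrix. -/
def traceLeft [Fintype a] (M : Matrix (a × m) (a × n) R) : Matrix m n R :=
  ∑ i, M.submatrix (Prod.mk i) (Prod.mk i)

/-- The operator `|φ⟩ ⊗ I : x ↦ φ ⊗ x`, which adjoins an ancilla in the (not necessarily
normalized) state `φ`. -/
def ketTensorOne (n : Type*) [DecidableEq n] (φ : a → R) : Matrix (a × n) n R :=
  of fun p y => φ p.1 * (1 : Matrix n n R) p.2 y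

lemma ketTensorOne_mul_apply [Fintype m] [DecidableEq m] (φ : a → R) (M : Matrix m n R)
    (p : a × m) (y : n) : (ketTensorOne m φ * M) p y = φ p.1 * M p.2 y := by
  simp [ketTensorOne, Matrix.mul_apply, one_apply]

lemma mul_ketTensorOne_apply [Fintype a] [Fintype n] [DecidableEq n] (M : Matrix m (a × n) R)
    (φ : a → R) (x : m) (y : n) :
    (M * ketTensorOne n φ) x y = ∑ i, M x (i, y) * φ i := by
  simp [ketTensorOne, Matrix.mul_apply, one_apply, Fintype.sum_prod_type]

lemma traceLeft_ketTensorOne_mul [Fintype a] [Fintype m] [DecidableEq m] [Fintype n]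
    [DecidableEq n] (φ : a → R) (M : Matrix m (a × n) R) :
    traceLeft (ketTensorOne m φ * M) = M * ketTensorOne n φ := by
  ext x y
  simp only [traceLeft, Matrix.sum_apply, submatrix_apply, ketTensorOne_mul_apply,
    mul_ketTensorOne_apply, mul_comm]

variable [StarRing R]

lemma mul_conjTranspose_ketTensorOne_apply [Fintype n] [DecidableEq n] (M : Matrix m n R)
    (φ : a → R) (x : m) (q : a × n) : (M * (ketTensorOne n φ)ᴴ) x q = M x q.2 * star (φ q.1) := by
  rw [← conjTranspose_conjTranspose M, ← conjTranspose_mul]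
  simp only [conjTranspose_apply, ketTensorOne_mul_apply, star_mul]

lemma conjTranspose_ketTensorOne_mul_apply [Fintype a] [Fintype m] [DecidableEq m] (φ : a → R)
    (M : Matrix (a × m) n R) (x : m) (y : n) :
    ((ketTensorOne m φ)ᴴ * M) x y = ∑ i, star (φ i) * M (i, x) y := by
  rw [← conjTranspose_conjTranspose M, ← conjTranspose_mul]
  simp only [conjTranspose_apply, mul_ketTensorOne_apply, star_sum, star_mul]

lemma vecMulVec_star_kronecker [Fintype m] [DecidableEq m] [Fintype n] [DecidableEq n]
    (φ : a → R) (ψ : b → R) (M : Matrix m n R) :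
    vecMulVec φ (star ψ) ⊗ₖ M = ketTensorOne m φ * M * (ketTensorOne n ψ)ᴴ := by
  ext p q
  rw [mul_conjTranspose_ketTensorOne_apply, ketTensorOne_mul_apply]
  simp only [kroneckerMap_apply, vecMulVec_apply, Pi.star_apply, mul_right_comm]

/-- The partial matrix element `⟨φ|C|ψ⟩ = (⟨φ| ⊗ I) C (|ψ⟩ ⊗ I)` of an operator `C` on a tensor
product, an operator on the right factor: the Kraus operator of preparing the ancilla in state `ψ`,
applying `C`, and finding the ancilla in state `φ`. -/
def partialMatrixElement [Fintype a] [Fintype b] [Fintype m] [DecidableEq m] [Fintype n]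
    [DecidableEq n] (φ : a → R) (C : Matrix (a × m) (b × n) R) (ψ : b → R) : Matrix m n R :=
  (ketTensorOne m φ)ᴴ * C * ketTensorOne n ψ

variable [Fintype a] [Fintype b] [Fintype m] [DecidableEq m] [Fintype n] [DecidableEq n]

lemma conjTranspose_partialMatrixElement (φ : a → R) (C : Matrix (a × m) (b × n) R) (ψ : b → R) :
    (partialMatrixElement φ C ψ)ᴴ = partialMatrixElement ψ Cᴴ φ := by
  simp only [partialMatrixElement, conjTranspose_mul, conjTranspose_conjTranspose,
    Matrix.mul_assoc]

lemma partialMatrixElement_eq_sum (φ : a → R) (C : Matrix (a × m) (b × n) R) (ψ : b → R) :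
    partialMatrixElement φ C ψ
      = ∑ j, ∑ i, (star (φ i) * ψ j) • C.submatrix (Prod.mk i) (Prod.mk j) := by
  ext x y
  simp only [partialMatrixElement, mul_ketTensorOne_apply,
    conjTranspose_ketTensorOne_mul_apply, Matrix.sum_apply, Matrix.smul_apply,
    submatrix_apply, smul_eq_mul, Finset.sum_mul, mul_right_comm]

theorem traceLeft_vecMulVec_kronecker_mul (φ : a → R) (ψ : b → R) (C : Matrix (a × m) (b × n) R)
    (ρ : Matrix n n R) :
    traceLeft ((vecMulVec φ (star φ) ⊗ₖ (1 : Matrix m m R)) * C * (vecMulVec ψ (star ψ) ⊗ₖ ρ) * Cᴴ)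
      = partialMatrixElement φ C ψ * ρ * (partialMatrixElement φ C ψ)ᴴ := by
  rw [conjTranspose_partialMatrixElement]
  simp only [vecMulVec_star_kronecker, Matrix.mul_one, Matrix.mul_assoc,
    traceLeft_ketTensorOne_mul, partialMatrixElement]

end PartialMatrixElement

lemma ptrAnc2_eq_traceLeft {nA nB : Type*} [Fintype nA] [Fintype nB]
    (M : Matrix ((Fin 2 × Fin 2) × nA × nB) ((Fin 2 × Fin 2) × nA × nB) ℂ) :
    ptrAnc2 M = traceLeft M := by
  ext x y
  simp only [ptrAnc2, traceLeft, Matrix.sum_apply, submatrix_apply]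

lemma ctrl_submatrix {m : Type*} [Fintype m] [DecidableEq m] (S : Matrix m m ℂ) (i j : Fin 2) :
    (ctrl S).submatrix (Prod.mk i) (Prod.mk j) = if i = j then S ^ (i : ℕ) else 0 := by
  ext x y
  fin_cases i <;> fin_cases j <;> simp [ctrl, ket0, ket1, vecMulVec_apply]

lemma combineCtrl_submatrix {nA nB : Type*} (CA : Matrix (Fin 2 × nA) (Fin 2 × nA) ℂ)
    (CB : Matrix (Fin 2 × nB) (Fin 2 × nB) ℂ) (p q : Fin 2 × Fin 2) :
    (combineCtrl CA CB).submatrix (Prod.mk p) (Prod.mk q)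
      = CA.submatrix (Prod.mk p.1) (Prod.mk q.1) ⊗ₖ CB.submatrix (Prod.mk p.2) (Prod.mk q.2) :=
  rfl

lemma star_bell_mul_bell (p q : Fin 2 × Fin 2) :
    star (bell p) * bell q = if p.1 = p.2 ∧ q.1 = q.2 then 1 / 2 else 0 := by
  have inv_sqrt_two_sq : ((√2 : ℝ) : ℂ)⁻¹ * ((√2 : ℝ) : ℂ)⁻¹ = 1 / 2 := by
    rw [← mul_inv, ← Complex.ofReal_mul, Real.mul_self_sqrt zero_le_two, Complex.ofReal_ofNat,
      one_div]
  by_cases hp : p.1 = p.2 <;> by_cases hq : q.1 = q.2 <;>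
    simp [bell, hp, hq, inv_sqrt_two_sq]

lemma partialMatrixElement_bell {m n : Type*} [Fintype m] [DecidableEq m] [Fintype n]
    [DecidableEq n] (C : Matrix ((Fin 2 × Fin 2) × m) ((Fin 2 × Fin 2) × n) ℂ) :
    partialMatrixElement bell C bell
      = (1 / 2 : ℂ) • ∑ j, ∑ i, C.submatrix (Prod.mk (i, i)) (Prod.mk (j, j)) := by
  simp only [partialMatrixElement_eq_sum, star_bell_mul_bell, Fintype.sum_prod_type, ite_smul,
    zero_smul, ite_and, Finset.sum_ite_eq, Finset.mem_univ, if_true, Finset.smul_sum]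
  refine Finset.sum_congr rfl fun j _ => ?_
  rw [Finset.sum_comm]
  simp only [Finset.sum_ite_eq, Finset.mem_univ, if_true]

lemma partialMatrixElement_bell_combineCtrl {nA nB : Type*} [Fintype nA] [DecidableEq nA]
    [Fintype nB] [DecidableEq nB] (SA : Matrix nA nA ℂ) (SB : Matrix nB nB ℂ) :
    partialMatrixElement bell (combineCtrl (ctrl SA) (ctrl SB)) bell
      = (1 / 2 : ℂ) • (1 + SA ⊗ₖ SB) := by
  simp [partialMatrixElement_bell, combineCtrl_submatrix, ctrl_submatrix, Fin.sum_univ_two]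

theorem stmt19_general {nA nB : Type*} [Fintype nA] [DecidableEq nA] [Fintype nB] [DecidableEq nB]
    (SA : Matrix nA nA ℂ) (SB : Matrix nB nB ℂ) (D : Matrix (nA × nB) (nA × nB) ℂ)
    (hD : D = (1 / 2 : ℂ) • (1 + SA ⊗ₖ SB))
    (ρ : Matrix (nA × nB) (nA × nB) ℂ) :
    ptrAnc2 ((vecMulVec bell (star bell) ⊗ₖ (1 : Matrix (nA × nB) (nA × nB) ℂ))
        * combineCtrl (ctrl SA) (ctrl SB)
        * (vecMulVec bell (star bell) ⊗ₖ ρ)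
        * (combineCtrl (ctrl SA) (ctrl SB))ᴴ)
      = D * ρ * Dᴴ := by
  rw [hD, ptrAnc2_eq_traceLeft, traceLeft_vecMulVec_kronecker_mul,
    partialMatrixElement_bell_combineCtrl]

/-- the distributed realization of the SWAP projection: tracing the
two-qubit Bell ancilla out of `(|Φ⟩⟨Φ| ⊗ I) · (cS_A ⊗ cS_B)(|Φ⟩⟨Φ| ⊗ ρ)(cS_A ⊗ cS_B)†`
gives `D ρ D†` with `D = (I + S_A ⊗ S_B)/2`. -/
theorem stmt19 {nA nB : Type*} [Fintype nA] [DecidableEq nA] [Fintype nB] [DecidableEq nB]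
    (SA : Matrix nA nA ℂ) (hSA : SA ∈ Matrix.unitaryGroup nA ℂ)
    (SB : Matrix nB nB ℂ) (hSB : SB ∈ Matrix.unitaryGroup nB ℂ)
    (D : Matrix (nA × nB) (nA × nB) ℂ)
    (hD : D = (1 / 2 : ℂ) • (1 + SA ⊗ₖ SB))
    (ρ : Matrix (nA × nB) (nA × nB) ℂ) :
    ptrAnc2 ((vecMulVec bell (star bell) ⊗ₖ (1 : Matrix (nA × nB) (nA × nB) ℂ))
        * combineCtrl (ctrl SA) (ctrl SB)
        * (vecMulVec bell (star bell) ⊗ₖ ρ)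
        * (combineCtrl (ctrl SA) (ctrl SB))ᴴ)
      = D * ρ * Dᴴ :=
  stmt19_general SA SB D hD ρ
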